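/- Let M=(Q,Γ,Δ,q₀,γ₀) be a DCFS, k∈ℕ, F⊆Q, P the stratified-trace PDA constructed from M, k and F, and μ the map sending a configuration c of M with Active(c)=⊥ to the PDA configuration (State(c),⊥) and with Active(c)=(w,i) (w∈Γ∪{ε}, i∈{0,…,k}) to (State(c),(w,i)). For every i∈{0,…,k}, PDA configurations ς,ς', configuration c of M whose active component is ⊥ or has stack content in Γ∪{ε} and switch number in {0,…,k}, and σ_i∈Σ_i*: if ς→*ς' in T(P) via a run labelled σ_i, μ(c)=ς, and Idle(c)((α,i)) ≥ |σ_i|_{(α,i,◁)} for all α∈Γ∪{ε}, then there exists a configuration c' of M such that (1) μ(c')=ς'; (2) c→*c' in T_{{i}}(M); (3) Idle(c')((α,i))=Idle(c)((α,i))−|σ_i|_{(α,i,◁)} and Idle(c')((α,i+1))=Idle(c)((α,i+1))+|σ_i|_{(α,i+1,▷)} for all α∈Γ∪{ε}; (4) Idle(c')((α,j))=Idle(c)((α,j)) for all α∈Γ∪{ε} and j∈{0,…,k+1} with j∉{i,i+1}. -/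

import Mathlib

namespace DCPSFormal

/-- Rules of a dynamic network of concurrent pushdown systems (DCPS):
creation rules `⟨q,γ⟩ → ⟨q',u⟩ ▷ α` (with `α = none` meaning `ε`),
interruption rules `⟨q,γ⟩ ↦ ⟨q',u⟩`, and resumption rules `q ↦ q' ◁ γ`. -/
inductive Rule (Q Γ : Type*) where
  | cr : Q → Γ → Q → List Γ → Option Γ → Rule Q Γ
  | intr : Q → Γ → Q → List Γ → Rule Q Γ
  | res : Q → Γ → Q → Rule Q Γ

/-- A DCPS: a set of rules, an initial state and an initial stack symbol. -/
structure DCPS (Q Γ : Type*) where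
  rules : Set (Rule Q Γ)
  q0 : Q
  γ0 : Γ

/-- Well-formedness of a DCPS: every pushed word has length at most 2. -/
def IsDCPSWf {Q Γ : Type*} (M : DCPS Q Γ) : Prop :=
  ∀ r ∈ M.rules,
    match r with
    | .cr _ _ _ u _ => u.length ≤ 2
    | .intr _ _ _ u => u.length ≤ 2
    | .res _ _ _ => True

/-- A DCFS is a DCPS in which every pushed word has length at most 1. -/
def IsDCFS {Q Γ : Type*} (M : DCPS Q Γ) : Prop :=
  ∀ r ∈ M.rules,
    match r with
    | .cr _ _ _ u _ => u.length ≤ 1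
    | .intr _ _ _ u => u.length ≤ 1
    | .res _ _ _ => True

/-- A configuration of a DCPS: global state, optional active local configuration
(stack content and switch number), and a finitely supported multiset of pending
local configurations. -/
structure Config (Q Γ : Type*) where
  state : Q
  active : Option (List Γ × ℕ)
  idle : (List Γ × ℕ) →₀ ℕ

/-- The thread possibly spawned by a creation rule with creation component `α`
when the active thread has switch number `i`. -/
noncomputable def spawnOf {Γ : Type*} (α : Option Γ) (i : ℕ) : (List Γ × ℕ) →₀ ℕ :=
  match α with
  | none => 0
  | some a => Finsupp.single ([a], i + 1) 1

/-- The transition system `T(M)` of a DCPS, with steps labelled by rules. -/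
inductive Step {Q Γ : Type*} (M : DCPS Q Γ) : Rule Q Γ → Config Q Γ → Config Q Γ → Prop
  | cr {q γ q' u α w i V} :
      Rule.cr q γ q' u α ∈ M.rules →
      Step M (.cr q γ q' u α) ⟨q, some (γ :: w, i), V⟩ ⟨q', some (u ++ w, i), V + spawnOf α i⟩
  | intr {q γ q' u w i V} :
      Rule.intr q γ q' u ∈ M.rules →
      Step M (.intr q γ q' u) ⟨q, some (γ :: w, i), V⟩
        ⟨q', none, V + Finsupp.single (u ++ w, i + 1) 1⟩
  | res {q γ q' w i V} :
      Rule.res q γ q' ∈ M.rules →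
      Step M (.res q γ q') ⟨q, none, V + Finsupp.single (γ :: w, i) 1⟩ ⟨q', some (γ :: w, i), V⟩

/-- `c ∈ Conf_I(M)`: the active thread exists and its switch number lies in `I`. -/
def ActiveIn {Q Γ : Type*} (I : Set ℕ) (c : Config Q Γ) : Prop :=
  ∃ w i, c.active = some (w, i) ∧ i ∈ I

/-- The `I`-bounded transition system `T_I(M)`. -/
def StepIn {Q Γ : Type*} (M : DCPS Q Γ) (I : Set ℕ) (r : Rule Q Γ) (c c' : Config Q Γ) : Prop :=
  Step M r c c' ∧ (ActiveIn I c ∨ ActiveIn I c')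

/-- Reachability in `T(M)`. -/
def Reaches {Q Γ : Type*} (M : DCPS Q Γ) : Config Q Γ → Config Q Γ → Prop :=
  Relation.ReflTransGen (fun a b => ∃ r, Step M r a b)

/-- Reachability in `T_I(M)`. -/
def ReachesIn {Q Γ : Type*} (M : DCPS Q Γ) (I : Set ℕ) : Config Q Γ → Config Q Γ → Prop :=
  Relation.ReflTransGen (fun a b => ∃ r, StepIn M I r a b)

/-- The initial configuration of a DCPS. -/
noncomputable def initConfig {Q Γ : Type*} (M : DCPS Q Γ) : Config Q Γ :=
  ⟨M.q0, none, Finsupp.single ([M.γ0], 0) 1⟩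

/-- `q` is reachable by `M`. -/
def StateReachable {Q Γ : Type*} (M : DCPS Q Γ) (q : Q) : Prop :=
  ∃ c, Reaches M (initConfig M) c ∧ c.active = none ∧ c.state = q

/-- `q` is `k`-bounded reachable by `M`. -/
def KBoundedReachable {Q Γ : Type*} (M : DCPS Q Γ) (k : ℕ) (q : Q) : Prop :=
  ∃ c, ReachesIn M {i | i ≤ k} (initConfig M) c ∧ c.active = none ∧ c.state = q

/-- `q` is `k`-stratified reachable by `M`. -/
def KStratifiedReachable {Q Γ : Type*} (M : DCPS Q Γ) (k : ℕ) (q : Q) : Prop :=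
  ∃ c : ℕ → Config Q Γ, c 0 = initConfig M ∧
    (∀ l ≤ k, ReachesIn M {l} (c l) (c (l + 1))) ∧
    (c (k + 1)).active = none ∧ (c (k + 1)).state = q

/-- A labelled run in a labelled transition system. -/
inductive LRun {C L : Type*} (step : L → C → C → Prop) : List L → C → C → Prop
  | nil (c) : LRun step [] c c
  | cons {l τ c c' c''} : step l c c' → LRun step τ c' c'' → LRun step (l :: τ) c c''

/-- A pushdown automaton with states `S`, input alphabet `A` and stack alphabet `Γ`. -/
structure PDA (S A Γ : Type*) where
  trans : Set ((S × Γ) × Option A × (S × List Γ))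
  p0 : S
  γ0 : Γ
  final : Set S

/-- A single (possibly `ε`-labelled) step of a PDA. -/
inductive PDAStep {S A Γ : Type*} (P : PDA S A Γ) :
    Option A → (S × List Γ) → (S × List Γ) → Prop
  | mk {p γ a p' u w} : ((p, γ), a, (p', u)) ∈ P.trans →
      PDAStep P a (p, γ :: w) (p', u ++ w)

/-- A run of a PDA labelled by the word obtained by concatenating all non-`ε` labels. -/
inductive PDATrace {S A Γ : Type*} (P : PDA S A Γ) :
    List A → (S × List Γ) → (S × List Γ) → Prop
  | nil (c) : PDATrace P [] c c
  | eps {v c c' c''} : PDAStep P none c c' → PDATrace P v c' c'' → PDATrace P v c c''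
  | cons {a v c c' c''} : PDAStep P (some a) c c' → PDATrace P v c' c'' →
      PDATrace P (a :: v) c c''

/-- The language of a PDA (acceptance by final state). -/
def PDALang {S A Γ : Type*} (P : PDA S A Γ) : Set (List A) :=
  { v | ∃ p w, p ∈ P.final ∧ PDATrace P v (P.p0, [P.γ0]) (p, w) }

/-- A finite state automaton. -/
structure FSA (S A : Type*) where
  trans : Set (S × Option A × S)
  init : Set S
  final : Set S

/-- A run of an FSA labelled by a word (`ε`-labels contribute nothing). -/
inductive FSARun {S A : Type*} (Au : FSA S A) : List A → S → S → Prop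
  | nil (s) : FSARun Au [] s s
  | eps {v s s' s''} : (s, none, s') ∈ Au.trans → FSARun Au v s' s'' → FSARun Au v s s''
  | cons {a v s s' s''} : (s, some a, s') ∈ Au.trans → FSARun Au v s' s'' →
      FSARun Au (a :: v) s s''

/-- The language of an FSA. -/
def FSALang {S A : Type*} (Au : FSA S A) : Set (List A) :=
  { v | ∃ s ∈ Au.init, ∃ s' ∈ Au.final, FSARun Au v s s' }

/-- A vector addition system with states of dimension `n`. -/
structure VASS (n : ℕ) (S A : Type*) where
  δ : S → A → S × (Fin n → ℤ)
  s0 : S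
  v0 : Fin n → ℕ

/-- A step of a VASS: `(q₁,u₁) →ᵃ (q₂,u₂)` iff `δ(q₁,a) = (q₂, u₂ - u₁)`. -/
def VStep {n : ℕ} {S A : Type*} (V : VASS n S A) (a : A) :
    (S × (Fin n → ℕ)) → (S × (Fin n → ℕ)) → Prop :=
  fun c c' => (V.δ c.1 a).1 = c'.1 ∧ ∀ i, (c'.2 i : ℤ) = (c.2 i : ℤ) + (V.δ c.1 a).2 i

/-- Reachability in the transition system of a VASS. -/
def VReaches {n : ℕ} {S A : Type*} (V : VASS n S A) :
    (S × (Fin n → ℕ)) → (S × (Fin n → ℕ)) → Prop :=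
  Relation.ReflTransGen (fun c c' => ∃ a, VStep V a c c')

/-- A state `s` is reachable by the VASS `V`. -/
def VStateReachable {n : ℕ} {S A : Type*} (V : VASS n S A) (s : S) : Prop :=
  ∃ u, VReaches V (V.s0, V.v0) (s, u)

/-- The `i`-th unit vector. -/
def unitVec {m : ℕ} (i : Fin m) : Fin m → ℤ := fun j => if j = i then 1 else 0

/-- The three kinds of letters of the stratified-trace PDA: `▷` (spawn/interrupt),
`◁` (resume), and `−` (silent). -/
inductive Dir where
  | spawn : Dir
  | resume : Dir
  | silent : Dir
deriving DecidableEq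

/-- Letters of the stratified-trace PDA: triples over `Γ ∪ {ε}`, a switch number,
and a direction. -/
abbrev Lbl (Γ : Type*) := Option Γ × ℕ × Dir

/-- The sub-alphabet `Σ_i = ((Γ∪{ε})×{i+1}×{▷}) ∪ (Γ×{i}×{◁}) ∪ {(ε,i,−)}`. -/
def SigmaI {Γ : Type*} (i : ℕ) : Set (Lbl Γ) :=
  { l | (∃ α : Option Γ, l = (α, i + 1, Dir.spawn)) ∨
        (∃ γ : Γ, l = (some γ, i, Dir.resume)) ∨ l = (none, i, Dir.silent) }

/-- Stack symbols of the stratified-trace PDA: `⊥` (= `none`) or a pair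
`(w,i)` with `w ∈ Γ ∪ {ε}` and `i` a switch number. -/
abbrev PSym (Γ : Type*) := Option (Option Γ × ℕ)

/-- The transitions of the stratified-trace PDA constructed from a DCFS `M` and `k`
(the pushed word `u` of a DCFS rule, of length at most 1, is represented by `u.head?`). -/
inductive STrans {Q Γ : Type*} (M : DCPS Q Γ) (k : ℕ) :
    ((Q × PSym Γ) × Option (Lbl Γ) × (Q × List (PSym Γ))) → Prop
  | silent {q γ q' u} (i : ℕ) : Rule.cr q γ q' u none ∈ M.rules → i ≤ k →
      STrans M k ((q, some (some γ, i)), some (none, i, Dir.silent), (q', [some (u.head?, i)]))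
  | spawn {q γ q' u a} (i : ℕ) : Rule.cr q γ q' u (some a) ∈ M.rules → i ≤ k →
      STrans M k
        ((q, some (some γ, i)), some (some a, i + 1, Dir.spawn), (q', [some (u.head?, i)]))
  | intr {q γ q' u} (i : ℕ) : Rule.intr q γ q' u ∈ M.rules → i ≤ k →
      STrans M k ((q, some (some γ, i)), some (u.head?, i + 1, Dir.spawn), (q', [none]))
  | res {q γ q'} (i : ℕ) : Rule.res q γ q' ∈ M.rules → i ≤ k →
      STrans M k ((q, none), some (some γ, i, Dir.resume), (q', [some (some γ, i)]))

/-- The stratified-trace PDA constructed from a DCFS `M`, `k ∈ ℕ` and `F ⊆ Q`. -/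
def stratPDA {Q Γ : Type*} (M : DCPS Q Γ) (k : ℕ) (F : Set Q) : PDA Q (Lbl Γ) (PSym Γ) where
  trans := { t | STrans M k t }
  p0 := M.q0
  γ0 := none
  final := F

/-- The simulation map `μ` from configurations of the DCFS `M` (whose active
component is `⊥` or has stack content in `Γ ∪ {ε}`) to configurations of the
stratified-trace PDA. -/
def muP {Q Γ : Type*} (c : Config Q Γ) : Q × List (PSym Γ) :=
  (c.state,
    match c.active with
    | none => [none]
    | some (w, i) => [some (w.head?, i)])

/-- The active component of `c` is `⊥` or has stack content in `Γ ∪ {ε}` and switch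
number in `{0,…,k}`. -/
def GoodActive {Q Γ : Type*} (k : ℕ) (c : Config Q Γ) : Prop :=
  c.active = none ∨ ∃ (w : Option Γ) (i : ℕ), i ≤ k ∧ c.active = some (w.toList, i)

/-! Every transition of the PDA comes from a rule of `M`. Since the words pushed by a DCFS have
length at most one, the active thread keeps at most one stack symbol, so that the top of the PDA
stack determines it, and the letter read records the only change to the multiset of pending threads
(`▷` adds a thread, `◁` consumes one). Hence a trace `σ` from `μ(c)` lifts to a run of `M` from
`c` as soon as every thread consumed along `σ` is already pending in `c`, and the two multisets
of pending threads differ by the threads that `σ` adds and consumes. -/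

theorem optionToList_injective {A : Type*} : Function.Injective (Option.toList (α := A)) :=
  Function.LeftInverse.injective (g := List.head?) fun a => by cases a <;> rfl

theorem toList_head?_of_length_le_one {A : Type*} {u : List A} (hu : u.length ≤ 1) :
    u.head?.toList = u := by
  match u, hu with
  | [], _ => rfl
  | [_], _ => rfl

section Letters

variable {Γ : Type*} {i j : ℕ} {α : Option Γ}

@[simp]
theorem spawn_mem_sigmaI : ((α, j, Dir.spawn) : Lbl Γ) ∈ SigmaI i ↔ j = i + 1 := by
  simp [SigmaI]

@[simp]
theorem resume_mem_sigmaI :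
    ((α, j, Dir.resume) : Lbl Γ) ∈ SigmaI i ↔ α.isSome ∧ j = i := by
  cases α <;> simp [SigmaI]

@[simp]
theorem silent_mem_sigmaI : ((α, j, Dir.silent) : Lbl Γ) ∈ SigmaI i ↔ α = none ∧ j = i := by
  simp [SigmaI]

variable [DecidableEq Γ] {σ : List (Lbl Γ)}

theorem count_spawn_eq_zero (hσ : ∀ x ∈ σ, x ∈ SigmaI i) (hj : j ≠ i + 1) :
    σ.count ((α, j, Dir.spawn) : Lbl Γ) = 0 :=
  List.count_eq_zero.2 fun hmem => hj (spawn_mem_sigmaI.1 (hσ _ hmem))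

theorem count_resume_eq_zero (hσ : ∀ x ∈ σ, x ∈ SigmaI i) (hj : j ≠ i) :
    σ.count ((α, j, Dir.resume) : Lbl Γ) = 0 :=
  List.count_eq_zero.2 fun hmem => hj (resume_mem_sigmaI.1 (hσ _ hmem)).2

end Letters

section Threads

variable {Γ : Type*}

/-- The multiset of threads recorded by a letter with direction `d`: the letter `(α, j, d)`
stands for the single local configuration `(α, j)`, and letters with another direction for none.
The directions `▷` and `◁` give the threads added to and removed from the pending ones. -/
noncomputable def letterThreads (d : Dir) (l : Lbl Γ) : (List Γ × ℕ) →₀ ℕ :=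
  if l.2.2 = d then Finsupp.single (l.1.toList, l.2.1) 1 else 0

/-- The multiset of threads recorded with direction `d` along a word of letters. -/
noncomputable def threads (d : Dir) (σ : List (Lbl Γ)) : (List Γ × ℕ) →₀ ℕ :=
  (σ.map (letterThreads d)).sum

@[simp]
theorem threads_nil (d : Dir) : threads d ([] : List (Lbl Γ)) = 0 := rfl

@[simp]
theorem threads_cons (d : Dir) (l : Lbl Γ) (σ : List (Lbl Γ)) :
    threads d (l :: σ) = letterThreads d l + threads d σ := by
  simp [threads]

theorem threads_apply_eq_zero (d : Dir) (σ : List (Lbl Γ)) {w : List Γ} (j : ℕ)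
    (hw : ∀ α : Option Γ, α.toList ≠ w) : threads d σ (w, j) = 0 := by
  induction σ with
  | nil => rfl
  | cons l σ ih =>
    have hl : letterThreads d l (w, j) = 0 := by
      unfold letterThreads
      split_ifs <;> simp [hw]
    simp [hl, ih]

variable [DecidableEq Γ]

theorem threads_apply_toList (d : Dir) (σ : List (Lbl Γ)) (α : Option Γ) (j : ℕ) :
    threads d σ (α.toList, j) = σ.count (α, j, d) := by
  induction σ with
  | nil => rfl
  | cons l σ ih =>
    obtain ⟨β, m, e⟩ := l
    have hl : letterThreads d (β, m, e) (α.toList, j) =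
        if (β, m, e) = (α, j, d) then 1 else 0 := by
      by_cases he : e = d <;>
        simp [letterThreads, Finsupp.single_apply, optionToList_injective.eq_iff, he]
    simp [hl, ih, List.count_cons, add_comm]

theorem threads_le_iff {d : Dir} {σ : List (Lbl Γ)} {V : (List Γ × ℕ) →₀ ℕ} :
    threads d σ ≤ V ↔ ∀ (α : Option Γ) (j : ℕ), σ.count (α, j, d) ≤ V (α.toList, j) := by
  refine ⟨fun h α j => threads_apply_toList d σ α j ▸ h (α.toList, j), fun h ⟨w, j⟩ => ?_⟩
  by_cases hw : ∃ α : Option Γ, α.toList = w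
  · obtain ⟨α, rfl⟩ := hw
    exact (threads_apply_toList d σ α j).trans_le (h α j)
  · exact (threads_apply_eq_zero d σ j (not_exists.1 hw)).trans_le (Nat.zero_le _)

variable {i : ℕ} {σ : List (Lbl Γ)} {V V' : (List Γ × ℕ) →₀ ℕ}

theorem threads_resume_le (hσ : ∀ x ∈ σ, x ∈ SigmaI i)
    (hcnt : ∀ α : Option Γ, σ.count ((α, i, Dir.resume) : Lbl Γ) ≤ V (α.toList, i)) :
    threads .resume σ ≤ V := by
  refine threads_le_iff.2 fun α j => ?_
  obtain rfl | hj := eq_or_ne j i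
  · exact hcnt α
  · exact (count_resume_eq_zero hσ hj).trans_le (Nat.zero_le _)

theorem apply_toList_of_add_threads_eq (hσ : ∀ x ∈ σ, x ∈ SigmaI i)
    (hV : V' + threads .resume σ = V + threads .spawn σ) :
    (∀ α : Option Γ,
      V' (α.toList, i) = V (α.toList, i) - σ.count ((α, i, Dir.resume) : Lbl Γ) ∧
      V' (α.toList, i + 1) = V (α.toList, i + 1) + σ.count ((α, i + 1, Dir.spawn) : Lbl Γ)) ∧
    ∀ (α : Option Γ) (j : ℕ), j ≠ i → j ≠ i + 1 → V' (α.toList, j) = V (α.toList, j) := by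
  have balance (α : Option Γ) (j : ℕ) : V' (α.toList, j) + σ.count (α, j, Dir.resume) =
      V (α.toList, j) + σ.count (α, j, Dir.spawn) := by
    simpa only [Finsupp.add_apply, threads_apply_toList] using DFunLike.congr_fun hV (α.toList, j)
  refine ⟨fun α => ⟨?_, ?_⟩, fun α j hji hji' => ?_⟩
  · have h := balance α i
    rw [count_spawn_eq_zero hσ (by lia)] at h
    lia
  · have h := balance α (i + 1)
    rwa [count_resume_eq_zero hσ (by lia)] at h
  · have h := balance α j
    rwa [count_resume_eq_zero hσ hji, count_spawn_eq_zero hσ hji'] at h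

end Threads

section Simulation

variable {Q Γ : Type*} {M : DCPS Q Γ} {k : ℕ}

/-- The inverse of `μ` once the pending threads are fixed: the configuration with state `q` and
pending threads `V` whose active component is the one encoded by the PDA stack symbol `x`. -/
def configOf (q : Q) (x : PSym Γ) (V : (List Γ × ℕ) →₀ ℕ) : Config Q Γ :=
  ⟨q, x.map (Prod.map Option.toList id), V⟩

theorem muP_configOf (q : Q) (x : PSym Γ) (V : (List Γ × ℕ) →₀ ℕ) :
    muP (configOf q x V) = (q, [x]) := by
  obtain _ | ⟨_ | _, _⟩ := x <;> rfl

theorem GoodActive.exists_eq_configOf {c : Config Q Γ} (hc : GoodActive k c) :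
    ∃ q x V, c = configOf q x V := by
  obtain ⟨q, active, V⟩ := c
  obtain rfl | ⟨w, i, -, rfl⟩ := hc
  · exact ⟨q, none, V, rfl⟩
  · exact ⟨q, some (w, i), V, rfl⟩

theorem goodActive_of_length_le_one (q : Q) {u : List Γ} {j : ℕ} (V : (List Γ × ℕ) →₀ ℕ)
    (hu : u.length ≤ 1) (hj : j ≤ k) : GoodActive k ⟨q, some (u, j), V⟩ :=
  .inr ⟨u.head?, j, hj, by rw [toList_head?_of_length_le_one hu]⟩

theorem STrans.exists_stepIn (hM : IsDCFS M) {I : Set ℕ} {q q' : Q} {x : PSym Γ} {l : Lbl Γ}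
    {s : List (PSym Γ)} (h : STrans M k ((q, x), some l, (q', s))) (hl : ∃ i ∈ I, l ∈ SigmaI i)
    {V : (List Γ × ℕ) →₀ ℕ} (hV : letterThreads .resume l ≤ V) :
    ∃ c', muP c' = (q', s) ∧ GoodActive k c' ∧ (∃ r, StepIn M I r (configOf q x V) c') ∧
      c'.idle + letterThreads .resume l = V + letterThreads .spawn l := by
  cases h with
  | @silent _ γ _ u j hr hj =>
    have hjI : j ∈ I := by simpa using hl
    have hstep : Step M _ (configOf q (some (some γ, j)) V) ⟨q', some (u ++ [], j), V + 0⟩ :=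
      .cr hr
    rw [List.append_nil, add_zero] at hstep
    exact ⟨_, rfl, goodActive_of_length_le_one q' V (hM _ hr) hj,
      ⟨_, hstep, .inl ⟨_, j, rfl, hjI⟩⟩, by simp [letterThreads]⟩
  | @spawn _ γ _ u a j hr hj =>
    have hjI : j ∈ I := by simpa using hl
    have hstep : Step M _ (configOf q (some (some γ, j)) V)
        ⟨q', some (u ++ [], j), V + Finsupp.single ([a], j + 1) 1⟩ := .cr hr
    rw [List.append_nil] at hstep
    exact ⟨_, rfl, goodActive_of_length_le_one q' _ (hM _ hr) hj,
      ⟨_, hstep, .inl ⟨_, j, rfl, hjI⟩⟩, by simp [letterThreads]⟩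
  | @intr _ γ _ u j hr hj =>
    have hjI : j ∈ I := by simpa using hl
    have hstep : Step M _ (configOf q (some (some γ, j)) V)
        ⟨q', none, V + Finsupp.single (u ++ [], j + 1) 1⟩ := .intr hr
    rw [List.append_nil] at hstep
    exact ⟨_, rfl, .inl rfl, ⟨_, hstep, .inl ⟨_, j, rfl, hjI⟩⟩,
      by simp [letterThreads, toList_head?_of_length_le_one (hM _ hr)]⟩
  | @res _ γ _ j hr hj =>
    have hjI : j ∈ I := by simpa using hl
    obtain ⟨W, rfl⟩ : ∃ W, V = W + Finsupp.single ([γ], j) 1 := by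
      simpa [letterThreads, add_comm] using exists_add_of_le hV
    have hstep : Step M _ (configOf q none (W + Finsupp.single ([γ], j) 1))
        ⟨q', some ([γ], j), W⟩ := .res hr
    exact ⟨_, rfl, goodActive_of_length_le_one q' W le_rfl hj,
      ⟨_, hstep, .inr ⟨_, j, rfl, hjI⟩⟩, by simp [letterThreads]⟩

theorem not_pdaStep_none {F : Set Q} {ς ς' : Q × List (PSym Γ)} :
    ¬ PDAStep (stratPDA M k F) none ς ς' := by
  rintro ⟨⟨⟩⟩

theorem PDAStep.exists_stepIn (hM : IsDCFS M) {F : Set Q} {I : Set ℕ} {l : Lbl Γ}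
    {c : Config Q Γ} {ς' : Q × List (PSym Γ)}
    (hstep : PDAStep (stratPDA M k F) (some l) (muP c) ς') (hc : GoodActive k c)
    (hl : ∃ i ∈ I, l ∈ SigmaI i) (hidle : letterThreads .resume l ≤ c.idle) :
    ∃ c', muP c' = ς' ∧ GoodActive k c' ∧ (∃ r, StepIn M I r c c') ∧
      c'.idle + letterThreads .resume l = c.idle + letterThreads .spawn l := by
  obtain ⟨q, x, V, rfl⟩ := hc.exists_eq_configOf
  rw [muP_configOf] at hstep
  obtain ⟨htrans⟩ := hstep
  rw [List.append_nil]
  exact STrans.exists_stepIn hM htrans hl hidle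

theorem dcfs_simulates_strat_pda_general (hM : IsDCFS M) {F : Set Q} {I : Set ℕ}
    {σ : List (Lbl Γ)} {c : Config Q Γ} {ς' : Q × List (PSym Γ)}
    (htrace : PDATrace (stratPDA M k F) σ (muP c) ς') (hc : GoodActive k c)
    (hσ : ∀ l ∈ σ, ∃ i ∈ I, l ∈ SigmaI i) (hidle : threads .resume σ ≤ c.idle) :
    ∃ c', muP c' = ς' ∧ GoodActive k c' ∧ ReachesIn M I c c' ∧
      c'.idle + threads .resume σ = c.idle + threads .spawn σ := by
  generalize hς : muP c = ς at htrace
  induction htrace generalizing c with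
  | nil => exact ⟨c, hς, hc, .refl, rfl⟩
  | eps hstep => exact absurd hstep not_pdaStep_none
  | @cons l τ _ _ _ hstep _ ih =>
    subst hς
    rw [List.forall_mem_cons] at hσ
    rw [threads_cons] at hidle
    obtain ⟨c₁, hμ₁, hc₁, hstep₁, hidle₁⟩ :=
      hstep.exists_stepIn hM hc hσ.1 (le_self_add.trans hidle)
    have hτ : threads .resume τ ≤ c₁.idle := by
      refine le_of_add_le_add_right (a := letterThreads .resume l) ?_
      calc threads .resume τ + letterThreads .resume l
          ≤ c.idle := by rwa [add_comm]
        _ ≤ c.idle + letterThreads .spawn l := le_self_add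
        _ = c₁.idle + letterThreads .resume l := hidle₁.symm
    obtain ⟨c', hμ', hc', hreach, hidle'⟩ := ih hc₁ hσ.2 hτ hμ₁
    refine ⟨c', hμ', hc', .head hstep₁ hreach, ?_⟩
    calc c'.idle + threads .resume (l :: τ)
        = (c'.idle + threads .resume τ) + letterThreads .resume l := by
          rw [threads_cons]; abel
      _ = (c₁.idle + letterThreads .resume l) + threads .spawn τ := by rw [hidle']; abel
      _ = c.idle + threads .spawn (l :: τ) := by rw [hidle₁, threads_cons, add_assoc]

end Simulation

/-- Every trace `σ_i ∈ Σ_i*` of the stratified-trace PDA starting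
in `μ(c)`, whose `◁`-letter counts are dominated by the pending threads of `c`, is
simulated by a run of the DCFS `M` in `T_{{i}}(M)` from `c` to a configuration `c'`
with `μ(c') = ς'` whose pending threads are updated according to the letter counts. -/
theorem dcfs_simulates_strat_pda
    (Q Γ : Type) [Fintype Q] [Fintype Γ] [DecidableEq Q] [DecidableEq Γ]
    (M : DCPS Q Γ) (hfin : M.rules.Finite) (hdcfs : IsDCFS M)
    (k : ℕ) (F : Set Q) (i : ℕ) (hik : i ≤ k)
    (ς ς' : Q × List (PSym Γ)) (c : Config Q Γ) (σ : List (Lbl Γ))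
    (htrace : PDATrace (stratPDA M k F) σ ς ς')
    (hmu : muP c = ς) (hc : GoodActive k c)
    (hσ : ∀ x ∈ σ, x ∈ SigmaI i)
    (hcnt : ∀ α : Option Γ, σ.count ((α, i, Dir.resume) : Lbl Γ) ≤ c.idle (α.toList, i)) :
    ∃ c' : Config Q Γ,
      muP c' = ς' ∧
      ReachesIn M {i} c c' ∧
      (∀ α : Option Γ,
        c'.idle (α.toList, i) = c.idle (α.toList, i) - σ.count ((α, i, Dir.resume) : Lbl Γ) ∧
        c'.idle (α.toList, i + 1) =
          c.idle (α.toList, i + 1) + σ.count ((α, i + 1, Dir.spawn) : Lbl Γ)) ∧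
      (∀ (α : Option Γ), ∀ j ≤ k + 1, j ≠ i → j ≠ i + 1 →
        c'.idle (α.toList, j) = c.idle (α.toList, j)) := by
  obtain ⟨c', hmu', -, hreach, hidle⟩ := dcfs_simulates_strat_pda_general (I := {i}) hdcfs
    (hmu ▸ htrace) hc (fun x hx => ⟨i, rfl, hσ x hx⟩) (threads_resume_le hσ hcnt)
  exact ⟨c', hmu', hreach,
    (apply_toList_of_add_threads_eq hσ hidle).imp_right fun hrest α j _ => hrest α j⟩

end DCPSFormal
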